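/- For all positive integers r, s, n, the number of r×s partial Latin rectangles based on n symbols of size 6 satisfies 720·|R_{r,s,n:6}| = rsn·(σ(5,5,5) − 15σ(5,4,4) + 30σ(4,4,4) + 85σ(5,3,3) + 210σ(4,4,3) − 420σ(4,3,3) − 225σ(5,2,2) − 1065σ(4,3,2) − 2150σ(3,3,3) + 2130σ(4,2,2) + 5310σ(3,3,2) + 274σ(5,1,1) + 2310σ(4,2,1) + 4400σ(3,3,1) + 4800σ(3,2,2) − 4620σ(4,1,1) − 22170σ(3,2,1) − 49500σ(2,2,2) − 120σ(5,0,0) − 1800σ(4,1,0) − 6000σ(3,2,0) + 10460σ(3,1,1) + 34980σ(2,2,1) + 3600σ(4,0,0) + 30600σ(3,1,0) + 58440σ(2,2,0) + 88710σ(2,1,1) − 34800σ(3,0,0) − 165480σ(2,1,0) − 364268σ(1,1,1) + 140040σ(2,0,0) + 344520σ(1,1,0) − 240720σ(1,0,0) + 146400). -/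

import Mathlib

open Finset

/-- `E` is (the entry set of) an `r × s` partial Latin rectangle based on `n` symbols:
no two distinct triples agree in both their first and second coordinates, in both their
first and third coordinates, or in both their second and third coordinates. -/
def IsPLR {r s n : ℕ} (E : Finset (Fin r × Fin s × Fin n)) : Prop :=
  ∀ e ∈ E, ∀ e' ∈ E, e ≠ e' →
    ¬(e.1 = e'.1 ∧ e.2.1 = e'.2.1) ∧
    ¬(e.1 = e'.1 ∧ e.2.2 = e'.2.2) ∧
    ¬(e.2.1 = e'.2.1 ∧ e.2.2 = e'.2.2)

/-- The number of entries of `E` in row `i`. -/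
def rowType {r s n : ℕ} (E : Finset (Fin r × Fin s × Fin n)) (i : Fin r) : ℕ :=
  (E.filter (fun e => e.1 = i)).card

/-- The number of entries of `E` in column `j`. -/
def colType {r s n : ℕ} (E : Finset (Fin r × Fin s × Fin n)) (j : Fin s) : ℕ :=
  (E.filter (fun e => e.2.1 = j)).card

/-- The number of occurrences of symbol `k` in `E`. -/
def symType {r s n : ℕ} (E : Finset (Fin r × Fin s × Fin n)) (k : Fin n) : ℕ :=
  (E.filter (fun e => e.2.2 = k)).card

/-- The number of `r × s` partial Latin rectangles based on `n` symbols of size `m`. -/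
noncomputable def numPLR (r s n m : ℕ) : ℕ :=
  Nat.card {E : Finset (Fin r × Fin s × Fin n) // IsPLR E ∧ E.card = m}

/-- `sig r s n a b c` is the sum of the distinct monomials `r^a' * s^b' * n^c'` as
`(a',b',c')` ranges over the distinct permutations of `(a,b,c)`. -/
def sig (r s n : ℤ) (a b c : ℕ) : ℤ :=
  ∑ p ∈ ({(a, b, c), (a, c, b), (b, a, c), (b, c, a), (c, a, b), (c, b, a)} :
      Finset (ℕ × ℕ × ℕ)),
    r ^ p.1 * s ^ p.2.1 * n ^ p.2.2

/-!
Ordering the `m` entries of a partial Latin rectangle multiplies the count by `m!`, and an ordered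
partial Latin rectangle is a triple of maps from an `m`-element set (to the rows, the columns and
the symbols) whose kernels are equivalence relations no two of which identify a common pair. Since
the number of maps to an `x`-element set with a prescribed kernel depends only on the number `k` of
its classes, being the falling factorial `x (x - 1) ⋯ (x - k + 1)`, we get
`m! |R_{r,s,n:m}| = ∑ N(a, b, c) (r)_a (s)_b (n)_c`, where `N(a, b, c)` is the number of disjoint
triples of equivalence relations with `a`, `b` and `c` classes. For `m = 6` these coefficients are
found by enumerating equivalence relations, and the formula is an identity of polynomials.
-/

open scoped Nat

section OrderedEnumerations

variable {ι τ : Type*} [Fintype ι] [Fintype τ]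

theorem card_embedding_map_univ_eq [DecidableEq τ] {E : Finset τ} (hE : #E = Fintype.card ι) :
    #{t : ι ↪ τ | univ.map t = E} = (Fintype.card ι)! := by
  have card_embedding : Fintype.card (ι ↪ E) = (Fintype.card ι)! := by
    rw [Fintype.card_embedding_eq, Fintype.card_coe, hE, Nat.descFactorial_self]
  rw [← card_embedding, ← card_univ]
  refine (card_bij (fun e _ ↦ e.trans (Function.Embedding.subtype _)) ?_ ?_ ?_).symm
  · intro e _
    rw [mem_filter_univ]
    refine eq_of_subset_of_card_le (fun x hx ↦ ?_) (by rw [card_map, hE, card_univ])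
    obtain ⟨i, -, rfl⟩ := mem_map.mp hx
    exact (e i).2
  · intro e _ e' _ h
    ext i
    exact DFunLike.congr_fun h i
  · intro t ht
    rw [mem_filter_univ] at ht
    exact ⟨t.codRestrict E fun i ↦ ht ▸ mem_map_of_mem t (mem_univ i), mem_univ _, rfl⟩

theorem factorial_mul_card_filter_eq_card_embedding (P : Finset τ → Prop) [DecidablePred P] :
    (Fintype.card ι)! * #{E : Finset τ | P E ∧ #E = Fintype.card ι} =
      #{t : ι ↪ τ | P (univ.map t)} := by
  classical
  have maps_map : Set.MapsTo (fun t : ι ↪ τ ↦ univ.map t)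
      ({t : ι ↪ τ | P (univ.map t)} : Finset _)
      ({E : Finset τ | P E ∧ #E = Fintype.card ι} : Finset _) := by
    intro t ht
    simpa using ht
  rw [card_eq_sum_card_fiberwise maps_map, mul_comm]
  refine (sum_const_nat fun E hE ↦ ?_).symm
  obtain ⟨hP, hcard⟩ := (mem_filter_univ E).mp hE
  rw [filter_filter, ← card_embedding_map_univ_eq hcard]
  congr 1
  ext t
  simp only [mem_filter_univ, and_iff_right_iff_imp]
  rintro rfl
  exact hP

end OrderedEnumerations

section Kernels

variable {ι α β : Type*}

instance finite_setoid [Finite ι] : Finite (Setoid ι) :=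
  Finite.of_injective (fun π : Setoid ι ↦ ⇑π) fun _ _ ↦ Setoid.eq_iff_rel_eq.mpr

/-- A function with kernel `π` is the same thing as an injection of the set of classes of `π`. -/
def kerEqEquivEmbedding (π : Setoid ι) (α : Type*) :
    {f : ι → α // Setoid.ker f = π} ≃ (Quotient π ↪ α) where
  toFun f := ⟨Quotient.lift f.1 fun i j h ↦ Setoid.ker_def.mp (f.2.ge h), by
    rintro ⟨i⟩ ⟨j⟩ h
    exact Quotient.sound (f.2.le (Setoid.ker_def.mpr h))⟩
  invFun e := ⟨fun i ↦ e ⟦i⟧, by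
    ext i j
    rw [Setoid.ker_def, e.injective.eq_iff, Quotient.eq]⟩
  left_inv _ := rfl
  right_inv e := by
    ext ⟨i⟩
    rfl

theorem card_ker_eq [Finite ι] [Finite α] (π : Setoid ι) :
    Nat.card {f : ι → α // Setoid.ker f = π} =
      (Nat.card α).descFactorial (Nat.card (Quotient π)) := by
  have := Fintype.ofFinite (Quotient π)
  have := Fintype.ofFinite α
  classical
  rw [Nat.card_congr (kerEqEquivEmbedding π α), Nat.card_eq_fintype_card,
    Fintype.card_embedding_eq, Nat.card_eq_fintype_card, Nat.card_eq_fintype_card]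

theorem disjoint_ker_iff {f : ι → α} {g : ι → β} :
    Disjoint (Setoid.ker f) (Setoid.ker g) ↔ ∀ i j, i ≠ j → ¬(f i = f j ∧ g i = g j) := by
  rw [disjoint_iff_inf_le, Setoid.le_def]
  refine forall₂_congr fun i j ↦ ?_
  rw [Setoid.inf_iff_and, Setoid.ker_def, Setoid.ker_def, Setoid.bot_def]
  exact not_imp_not.symm.trans Iff.rfl

end Kernels

section DisjointTriples

variable {ι α β γ : Type*}

/-- Three equivalence relations no two of which identify a common pair of distinct elements. The
kernels of the row, column and symbol maps of an ordered partial Latin rectangle are such a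
triple. -/
def IsDisjointTriple (π : Setoid ι × Setoid ι × Setoid ι) : Prop :=
  Disjoint π.1 π.2.1 ∧ Disjoint π.1 π.2.2 ∧ Disjoint π.2.1 π.2.2

/-- The numbers of classes of three equivalence relations. -/
noncomputable def numClasses (π : Setoid ι × Setoid ι × Setoid ι) : ℕ × ℕ × ℕ :=
  (Nat.card (Quotient π.1), Nat.card (Quotient π.2.1), Nat.card (Quotient π.2.2))

/-- The number of disjoint triples of equivalence relations on `ι` with `a`, `b` and `c` classes. -/
noncomputable def numDisjointTriples (ι : Type*) (a b c : ℕ) : ℕ :=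
  {π : Setoid ι × Setoid ι × Setoid ι | IsDisjointTriple π ∧ numClasses π = (a, b, c)}.ncard

theorem numDisjointTriples_swap_left (a b c : ℕ) :
    numDisjointTriples ι a b c = numDisjointTriples ι b a c := by
  let swapLeft : Setoid ι × Setoid ι × Setoid ι ≃ Setoid ι × Setoid ι × Setoid ι :=
    (Equiv.prodAssoc _ _ _).symm.trans
      (((Equiv.prodComm _ _).prodCongr (Equiv.refl _)).trans (Equiv.prodAssoc _ _ _))
  refine Set.ncard_congr' (swapLeft.subtypeEquiv fun π ↦ ?_)
  change IsDisjointTriple π ∧ numClasses π = (a, b, c) ↔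
    IsDisjointTriple (π.2.1, π.1, π.2.2) ∧ numClasses (π.2.1, π.1, π.2.2) = (b, a, c)
  simp only [IsDisjointTriple, numClasses, Prod.mk.injEq, disjoint_comm (a := π.2.1)]
  tauto

theorem numDisjointTriples_swap_right (a b c : ℕ) :
    numDisjointTriples ι a b c = numDisjointTriples ι a c b := by
  let swapRight : Setoid ι × Setoid ι × Setoid ι ≃ Setoid ι × Setoid ι × Setoid ι :=
    (Equiv.refl _).prodCongr (Equiv.prodComm _ _)
  refine Set.ncard_congr' (swapRight.subtypeEquiv fun π ↦ ?_)
  change IsDisjointTriple π ∧ numClasses π = (a, b, c) ↔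
    IsDisjointTriple (π.1, π.2.2, π.2.1) ∧ numClasses (π.1, π.2.2, π.2.1) = (a, c, b)
  simp only [IsDisjointTriple, numClasses, Prod.mk.injEq, disjoint_comm (a := π.2.1)]
  tauto

/-- The kernels of three functions with a common domain. -/
def kerTriple (p : (ι → α) × (ι → β) × (ι → γ)) : Setoid ι × Setoid ι × Setoid ι :=
  (Setoid.ker p.1, Setoid.ker p.2.1, Setoid.ker p.2.2)

theorem card_kerTriple_eq [Finite ι] [Finite α] [Finite β] [Finite γ]
    (π : Setoid ι × Setoid ι × Setoid ι) :
    {p : (ι → α) × (ι → β) × (ι → γ) | kerTriple p = π}.ncard =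
      (Nat.card α).descFactorial (numClasses π).1 *
        ((Nat.card β).descFactorial (numClasses π).2.1 *
          (Nat.card γ).descFactorial (numClasses π).2.2) := by
  have fiber_eq_prod : {p : (ι → α) × (ι → β) × (ι → γ) | kerTriple p = π} =
      {f | Setoid.ker f = π.1} ×ˢ {g | Setoid.ker g = π.2.1} ×ˢ {h | Setoid.ker h = π.2.2} := by
    ext p
    simp only [kerTriple, Prod.ext_iff, Set.mem_ofPred_eq, Set.mem_prod]
  rw [fiber_eq_prod, Set.ncard_prod, Set.ncard_prod]
  simp only [← Nat.card_coe_set_eq, Set.coe_ofPred, card_ker_eq, numClasses]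

theorem numClasses_mem_range [Fintype ι] (π : Setoid ι × Setoid ι × Setoid ι) :
    numClasses π ∈ range (Fintype.card ι + 1) ×ˢ range (Fintype.card ι + 1) ×ˢ
      range (Fintype.card ι + 1) := by
  have card_quotient_lt (ρ : Setoid ι) : Nat.card (Quotient ρ) < Fintype.card ι + 1 := by
    rw [Nat.lt_succ_iff, ← Nat.card_eq_fintype_card]
    exact Nat.card_le_card_of_surjective _ Quotient.mk_surjective
  simp only [numClasses, mem_product, mem_range, card_quotient_lt, and_self]

theorem card_isDisjointTriple_kerTriple [Fintype ι] [Finite α] [Finite β] [Finite γ] :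
    {p : (ι → α) × (ι → β) × (ι → γ) | IsDisjointTriple (kerTriple p)}.ncard =
      ∑ a ∈ range (Fintype.card ι + 1), ∑ b ∈ range (Fintype.card ι + 1),
        ∑ c ∈ range (Fintype.card ι + 1), numDisjointTriples ι a b c *
          ((Nat.card α).descFactorial a *
            ((Nat.card β).descFactorial b * (Nat.card γ).descFactorial c)) := by
  classical
  have := Fintype.ofFinite (Setoid ι)
  have := Fintype.ofFinite α
  have := Fintype.ofFinite β
  have := Fintype.ofFinite γ
  have maps_ker : ∀ p ∈ ({p | IsDisjointTriple (kerTriple p)} : Finset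
      ((ι → α) × (ι → β) × (ι → γ))), kerTriple p ∈ ({π | IsDisjointTriple π} : Finset _) :=
    fun p hp ↦ by simpa only [mem_filter_univ] using hp
  have card_ker_fiber : ∀ π ∈ ({π | IsDisjointTriple π} : Finset _),
      #{p ∈ ({p | IsDisjointTriple (kerTriple p)} : Finset ((ι → α) × (ι → β) × (ι → γ))) |
        kerTriple p = π} = (Nat.card α).descFactorial (numClasses π).1 *
          ((Nat.card β).descFactorial (numClasses π).2.1 *
            (Nat.card γ).descFactorial (numClasses π).2.2) := by
    intro π hπ
    rw [mem_filter_univ] at hπ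
    rw [filter_filter, ← card_kerTriple_eq, Set.ncard_eq_toFinset_card', Set.toFinset_ofPred]
    congr 1
    ext p
    simp only [mem_filter_univ, and_iff_right_iff_imp]
    rintro rfl
    exact hπ
  rw [Set.ncard_eq_toFinset_card', Set.toFinset_ofPred, card_eq_sum_card_fiberwise maps_ker,
    sum_congr rfl card_ker_fiber, ← sum_fiberwise_of_maps_to fun π _ ↦ numClasses_mem_range π,
    sum_product]
  simp only [sum_product]
  refine sum_congr rfl fun a _ ↦ sum_congr rfl fun b _ ↦ sum_congr rfl fun c _ ↦ ?_
  rw [filter_filter, numDisjointTriples, Set.ncard_eq_toFinset_card', Set.toFinset_ofPred]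
  refine sum_const_nat fun π hπ ↦ ?_
  rw [((mem_filter_univ π).mp hπ).2]

end DisjointTriples

section OrderedPartialLatinRectangles

variable {ι : Type*} [Fintype ι] {r s n : ℕ}

theorem isPLR_map_iff (t : ι ↪ Fin r × Fin s × Fin n) :
    IsPLR (univ.map t) ↔ IsDisjointTriple
      (kerTriple (fun i ↦ (t i).1, fun i ↦ (t i).2.1, fun i ↦ (t i).2.2)) := by
  simp only [IsPLR, IsDisjointTriple, kerTriple, disjoint_ker_iff, mem_map, mem_univ, true_and,
    forall_exists_index, forall_apply_eq_imp_iff, ne_eq, t.injective.eq_iff]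
  grind

theorem card_isPLR_map :
    {t : ι ↪ Fin r × Fin s × Fin n | IsPLR (univ.map t)}.ncard =
      {p : (ι → Fin r) × (ι → Fin s) × (ι → Fin n) |
        IsDisjointTriple (kerTriple p)}.ncard := by
  refine Set.ncard_congr
    (fun t _ ↦ (fun i ↦ (t i).1, fun i ↦ (t i).2.1, fun i ↦ (t i).2.2))
    (fun t ht ↦ (isPLR_map_iff t).mp ht) ?_ ?_
  · intro t t' _ _ h
    simp only [Prod.mk.injEq, funext_iff] at h
    ext1 i
    exact Prod.ext (h.1 i) (Prod.ext (h.2.1 i) (h.2.2 i))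
  · rintro ⟨f, g, h⟩ hp
    have injective : Function.Injective fun i ↦ (f i, g i, h i) := by
      intro i j hij
      simp only [Prod.mk.injEq] at hij
      by_contra hne
      exact disjoint_ker_iff.mp hp.1 i j hne ⟨hij.1, hij.2.1⟩
    exact ⟨⟨_, injective⟩, (isPLR_map_iff ⟨_, injective⟩).mpr hp, rfl⟩

theorem factorial_mul_numPLR (r s n m : ℕ) :
    m ! * numPLR r s n m =
      ∑ a ∈ range (m + 1), ∑ b ∈ range (m + 1), ∑ c ∈ range (m + 1),
        numDisjointTriples (Fin m) a b c *
          (r.descFactorial a * (s.descFactorial b * n.descFactorial c)) := by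
  classical
  have card_ordered : m ! * numPLR r s n m =
      {t : Fin m ↪ Fin r × Fin s × Fin n | IsPLR (univ.map t)}.ncard := by
    rw [numPLR, Nat.card_eq_fintype_card, Fintype.card_subtype, Set.ncard_eq_toFinset_card',
      Set.toFinset_ofPred, ← factorial_mul_card_filter_eq_card_embedding IsPLR, Fintype.card_fin]
  rw [card_ordered, card_isPLR_map, card_isDisjointTriple_kerTriple]
  simp only [Fintype.card_fin, Nat.card_eq_fintype_card]

end OrderedPartialLatinRectangles

section Leaders

variable {ι : Type*}

theorem card_quotient_ker_of_idempotent {c : ι → ι} (hc : ∀ i, c (c i) = c i) :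
    Nat.card (Quotient (Setoid.ker c)) = Nat.card {i // c i = i} := by
  have mem_range_iff (i : ι) : i ∈ Set.range c ↔ c i = i :=
    ⟨fun ⟨j, hj⟩ ↦ hj ▸ hc j, fun h ↦ ⟨i, h⟩⟩
  rw [Nat.card_congr (Setoid.quotientKerEquivRange c)]
  exact Nat.card_congr (Equiv.subtypeEquivRight mem_range_iff)

theorem eq_of_ker_eq_of_idempotent_of_le [PartialOrder ι] {c d : ι → ι}
    (hc : ∀ i, c (c i) = c i) (hd : ∀ i, d (d i) = d i) (hc_le : ∀ i, c i ≤ i)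
    (hd_le : ∀ i, d i ≤ i) (h : Setoid.ker c = Setoid.ker d) : c = d := by
  have d_comp_c (i : ι) : d (c i) = d i := Setoid.ker_def.mp (h.le (Setoid.ker_def.mpr (hc i)))
  have c_comp_d (i : ι) : c (d i) = c i := Setoid.ker_def.mp (h.ge (Setoid.ker_def.mpr (hd i)))
  funext i
  exact le_antisymm (c_comp_d i ▸ hc_le (d i)) (d_comp_c i ▸ hd_le (c i))

theorem exists_idempotent_le_ker_eq [LinearOrder ι] [WellFoundedLT ι] (π : Setoid ι) :
    ∃ c : ι → ι, (∀ i, c i ≤ i) ∧ (∀ i, c (c i) = c i) ∧ Setoid.ker c = π := by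
  have exists_least (i : ι) : ∃ j, IsLeast {k | π i k} j :=
    ⟨_, wellFounded_lt.min_mem _ ⟨i, π.refl i⟩, fun _ hk ↦ wellFounded_lt.min_le hk⟩
  choose c hc using exists_least
  have rel_apply (i : ι) : π i (c i) := (hc i).1
  have apply_eq {i j : ι} (hij : π i j) : c i = c j := by
    refine (hc i).unique ?_
    convert hc j using 1
    ext k
    exact ⟨π.trans (π.symm hij), π.trans hij⟩
  refine ⟨c, fun i ↦ (hc i).2 (π.refl i), fun i ↦ (apply_eq (rel_apply i)).symm, ?_⟩
  ext i j
  refine ⟨fun hij ↦ ?_, apply_eq⟩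
  rw [Setoid.ker_def] at hij
  exact π.trans (rel_apply i) (hij ▸ π.symm (rel_apply j))

variable {m k : ℕ}

/-- The maps sending every element of `Fin m` to the least element of its class, for the
equivalence relations on `Fin m` with `k` classes. They represent these relations by data that can
be enumerated by evaluation. -/
def leaders (m k : ℕ) : Finset (Fin m → Fin m) :=
  {c ∈ Fintype.piFinset fun i ↦ Iic i | (∀ i, c (c i) = c i) ∧ #{i | c i = i} = k}

theorem mem_leaders {c : Fin m → Fin m} :
    c ∈ leaders m k ↔ (∀ i, c i ≤ i) ∧ (∀ i, c (c i) = c i) ∧ #{i | c i = i} = k := by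
  simp only [leaders, mem_filter, Fintype.mem_piFinset, mem_Iic]

theorem bijOn_ker_leaders (m k : ℕ) :
    Set.BijOn Setoid.ker (leaders m k : Set (Fin m → Fin m)) {π | Nat.card (Quotient π) = k} := by
  have card_quotient {c : Fin m → Fin m} (hc : ∀ i, c (c i) = c i) :
      Nat.card (Quotient (Setoid.ker c)) = #{i | c i = i} := by
    rw [card_quotient_ker_of_idempotent hc, Nat.card_eq_fintype_card, Fintype.card_subtype]
  refine ⟨fun c hc ↦ ?_, fun c hc d hd h ↦ ?_, fun π hπ ↦ ?_⟩
  · obtain ⟨-, idem, hk⟩ := mem_leaders.mp hc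
    exact (card_quotient idem).trans hk
  · obtain ⟨hc_le, hc, -⟩ := mem_leaders.mp hc
    obtain ⟨hd_le, hd, -⟩ := mem_leaders.mp hd
    exact eq_of_ker_eq_of_idempotent_of_le hc hd hc_le hd_le h
  · obtain ⟨c, hle, idem, rfl⟩ := exists_idempotent_le_ker_eq π
    exact ⟨c, mem_leaders.mpr ⟨hle, idem, (card_quotient idem).symm.trans hπ⟩, rfl⟩

theorem bijOn_kerTriple_leaders (m a b c : ℕ) :
    Set.BijOn kerTriple {p | p.1 ∈ leaders m a ∧ p.2.1 ∈ leaders m b ∧ p.2.2 ∈ leaders m c}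
      {π | numClasses π = (a, b, c)} := by
  simp only [numClasses, Prod.mk.injEq]
  exact (bijOn_ker_leaders m a).prodMap ((bijOn_ker_leaders m b).prodMap (bijOn_ker_leaders m c))

end Leaders

section Masks

variable {α β : Type*} [DecidableEq α] [DecidableEq β] {m : ℕ}

/-- The kernel of `f` as a bit mask, with one bit for every pair `i < j`: disjointness of kernels
becomes a single bitwise conjunction, which is what makes the count below fast to evaluate. -/
def kerMask (f : Fin m → α) : ℕ :=
  Nat.ofBits fun k : Fin (m * m) ↦ decide (k.divNat < k.modNat ∧ f k.divNat = f k.modNat)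

theorem land_kerMask_eq_zero_iff {f : Fin m → α} {g : Fin m → β} :
    kerMask f &&& kerMask g = 0 ↔ Disjoint (Setoid.ker f) (Setoid.ker g) := by
  have testBit_eq (k : Fin (m * m)) : (kerMask f &&& kerMask g).testBit k =
      decide (k.divNat < k.modNat ∧ f k.divNat = f k.modNat ∧ g k.divNat = g k.modNat) := by
    simp only [Nat.testBit_and, kerMask, Nat.testBit_ofBits_lt _ _ k.isLt]
    grind
  rw [disjoint_ker_iff]
  constructor
  · intro h
    have not_both {i j : Fin m} (hij : i < j) : ¬(f i = f j ∧ g i = g j) := by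
      have bit := testBit_eq (Fin.mkDivMod i j)
      rw [h, Nat.zero_testBit] at bit
      simpa [hij] using bit
    intro i j hij
    rcases hij.lt_or_gt with hij | hji
    · exact not_both hij
    · exact fun ⟨hf, hg⟩ ↦ not_both hji ⟨hf.symm, hg.symm⟩
  · intro h
    refine Nat.eq_of_testBit_eq fun k ↦ ?_
    rw [Nat.zero_testBit]
    rcases lt_or_ge k (m * m) with hk | hk
    · refine (testBit_eq ⟨k, hk⟩).trans (decide_eq_false ?_)
      exact fun ⟨hlt, heq⟩ ↦ h _ _ hlt.ne heq
    · simp only [Nat.testBit_and, kerMask, Nat.testBit_ofBits_ge _ _ hk, Bool.and_self]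

end Masks

section Evaluation

theorem card_filter_product_product {α β γ : Type*} (A : Finset α) (B : Finset β) (C : Finset γ)
    (p : α → β → Prop) (q : α → γ → Prop) (r : β → γ → Prop) [∀ x, DecidablePred (p x)]
    [∀ x, DecidablePred (q x)] [∀ y, DecidablePred (r y)] :
    #{x ∈ A ×ˢ B ×ˢ C | p x.1 x.2.1 ∧ q x.1 x.2.2 ∧ r x.2.1 x.2.2} =
      ∑ x ∈ A, ∑ y ∈ B with p x y, #{z ∈ {z ∈ C | q x z} | r y z} := by
  simp only [card_filter, sum_product, sum_filter, ite_and]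
  refine sum_congr rfl fun x _ ↦ sum_congr rfl fun y _ ↦ ?_
  split_ifs <;> simp

/-- An evaluation procedure for the number of disjoint triples of equivalence relations on `Fin m`
with `a`, `b` and `c` classes. -/
def countDisjointTriples (m a b c : ℕ) : ℕ :=
  ∑ f ∈ leaders m a, ∑ g ∈ leaders m b with kerMask f &&& kerMask g = 0,
    #{h ∈ {h ∈ leaders m c | kerMask f &&& kerMask h = 0} | kerMask g &&& kerMask h = 0}

theorem numDisjointTriples_eq_count (m a b c : ℕ) :
    numDisjointTriples (Fin m) a b c = countDisjointTriples m a b c := by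
  have bijOn_disjoint := (bijOn_kerTriple_leaders m a b c).inter_mapsTo
    (s₂ := {p | IsDisjointTriple (kerTriple p)}) (t₂ := {π | IsDisjointTriple π})
    (fun _ ↦ id) Set.inter_subset_right
  rw [countDisjointTriples, ← card_filter_product_product (leaders m a) (leaders m b) (leaders m c)
    (fun f g ↦ kerMask f &&& kerMask g = 0) (fun f h ↦ kerMask f &&& kerMask h = 0)
    (fun g h ↦ kerMask g &&& kerMask h = 0), ← Set.ncard_coe_finset, numDisjointTriples,
    Set.ofPred_and, Set.inter_comm, ← bijOn_disjoint.ncard_eq]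
  simp only [land_kerMask_eq_zero_iff, coe_filter, mem_product, Set.ofPred_and]
  rfl

theorem forall_of_forall_sorted {α : Type*} [LinearOrder α] {p : α → α → α → Prop}
    (swap_left : ∀ a b c, p a b c → p b a c) (swap_right : ∀ a b c, p a b c → p a c b)
    (sorted : ∀ a b c, a ≤ b → b ≤ c → p a b c) (a b c : α) : p a b c := by
  rcases le_total a b with hab | hba <;> rcases le_total b c with hbc | hcb <;>
    rcases le_total a c with hac | hca <;> grind

/-- The number of disjoint triples of equivalence relations on a six-element set with `a`, `b` and
`c` classes, by lookup in a table in which zero rows are left empty. -/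
def disjointTripleTable (a b c : ℕ) : ℕ :=
  List.getD (List.getD (List.getD
    [[],
     [[], [], [], [], [], [], [0, 0, 0, 0, 0, 0, 1]],
     [[], [], [],
      [0, 0, 0, 120, 540, 360, 60],
      [0, 0, 0, 540, 3240, 2340, 360],
      [0, 0, 0, 360, 2340, 1680, 240],
      [0, 0, 0, 60, 360, 240, 31]],
     [[], [],
      [0, 0, 0, 120, 540, 360, 60],
      [0, 0, 120, 7680, 21120, 11880, 1560],
      [0, 0, 540, 21120, 47910, 23040, 2610],
      [0, 0, 360, 11880, 23040, 9660, 975],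
      [0, 0, 60, 1560, 2610, 975, 90]],
     [[], [],
      [0, 0, 0, 540, 3240, 2340, 360],
      [0, 0, 540, 21120, 47910, 23040, 2610],
      [0, 0, 3240, 47910, 76950, 29430, 2810],
      [0, 0, 2340, 23040, 29430, 9660, 825],
      [0, 0, 360, 2610, 2810, 825, 65]],
     [[], [],
      [0, 0, 0, 360, 2340, 1680, 240],
      [0, 0, 360, 11880, 23040, 9660, 975],
      [0, 0, 2340, 23040, 29430, 9660, 825],
      [0, 0, 1680, 9660, 9660, 2730, 210],
      [0, 0, 240, 975, 825, 210, 15]],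
     [[],
      [0, 0, 0, 0, 0, 0, 1],
      [0, 0, 0, 60, 360, 240, 31],
      [0, 0, 60, 1560, 2610, 975, 90],
      [0, 0, 360, 2610, 2810, 825, 65],
      [0, 0, 240, 975, 825, 210, 15],
      [0, 1, 31, 90, 65, 15, 1]]] a []) b []) c 0

theorem disjointTripleTable_swap : ∀ a < 7, ∀ b < 7, ∀ c < 7,
    disjointTripleTable a b c = disjointTripleTable b a c ∧
      disjointTripleTable a b c = disjointTripleTable a c b := by
  decide +kernel

theorem countDisjointTriples_six_of_sorted : ∀ c < 7, ∀ b ≤ c, ∀ a ≤ b,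
    countDisjointTriples 6 a b c = disjointTripleTable a b c := by
  decide +kernel

theorem numDisjointTriples_six : ∀ a b c, a < 7 → b < 7 → c < 7 →
    numDisjointTriples (Fin 6) a b c = disjointTripleTable a b c := by
  refine forall_of_forall_sorted ?_ ?_ ?_
  · intro a b c h hb ha hc
    rw [numDisjointTriples_swap_left, h ha hb hc, (disjointTripleTable_swap a ha b hb c hc).1]
  · intro a b c h ha hc hb
    rw [numDisjointTriples_swap_right, h ha hb hc, (disjointTripleTable_swap a ha b hb c hc).2]
  · intro a b c hab hbc _ _ hc
    rw [numDisjointTriples_eq_count, countDisjointTriples_six_of_sorted c hc b hbc a hab]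

theorem mul_numPLR_six (r s n : ℕ) :
    720 * numPLR r s n 6 = ∑ a ∈ range 7, ∑ b ∈ range 7, ∑ c ∈ range 7,
      disjointTripleTable a b c *
        (r.descFactorial a * (s.descFactorial b * n.descFactorial c)) := by
  rw [show 720 = 6 ! from rfl, factorial_mul_numPLR]
  refine sum_congr rfl fun a ha ↦ sum_congr rfl fun b hb ↦ sum_congr rfl fun c hc ↦ ?_
  rw [numDisjointTriples_six a b c (mem_range.mp ha) (mem_range.mp hb) (mem_range.mp hc)]

end Evaluation

section Polynomials

theorem cast_descFactorial_eq_prod {R : Type*} [CommRing R] (x k : ℕ) :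
    (x.descFactorial k : R) = ∏ i ∈ range k, ((x : R) - i) := by
  rw [← descPochhammer_eval_eq_descFactorial, descPochhammer_eval_eq_prod_range]

variable (r s n : ℤ) {a b c : ℕ}

theorem sig_self_self_self (a : ℕ) : sig r s n a a a = r ^ a * s ^ a * n ^ a := by
  simp [sig]

theorem sig_self_self (h : a ≠ b) : sig r s n a a b =
    r ^ a * s ^ a * n ^ b + r ^ a * s ^ b * n ^ a + r ^ b * s ^ a * n ^ a := by
  simp [sig, h, h.symm, add_assoc]

theorem sig_self_right (h : a ≠ b) : sig r s n a b b =
    r ^ a * s ^ b * n ^ b + r ^ b * s ^ a * n ^ b + r ^ b * s ^ b * n ^ a := by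
  simp [sig, h, h.symm, add_assoc]

theorem sig_of_ne (hab : a ≠ b) (hac : a ≠ c) (hbc : b ≠ c) : sig r s n a b c =
    r ^ a * s ^ b * n ^ c + r ^ a * s ^ c * n ^ b + r ^ b * s ^ a * n ^ c +
      r ^ b * s ^ c * n ^ a + r ^ c * s ^ a * n ^ b + r ^ c * s ^ b * n ^ a := by
  simp [sig, hab, hab.symm, hac, hac.symm, hbc, hbc.symm, add_assoc]

end Polynomials

theorem stmt8 (r s n : ℕ) (hr : 0 < r) (hs : 0 < s) (hn : 0 < n) :
    (720 : ℤ) * numPLR r s n 6 =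
      (r : ℤ) * s * n *
        (sig r s n 5 5 5 - 15 * sig r s n 5 4 4 + 30 * sig r s n 4 4 4
          + 85 * sig r s n 5 3 3 + 210 * sig r s n 4 4 3 - 420 * sig r s n 4 3 3
          - 225 * sig r s n 5 2 2 - 1065 * sig r s n 4 3 2 - 2150 * sig r s n 3 3 3
          + 2130 * sig r s n 4 2 2 + 5310 * sig r s n 3 3 2 + 274 * sig r s n 5 1 1
          + 2310 * sig r s n 4 2 1 + 4400 * sig r s n 3 3 1 + 4800 * sig r s n 3 2 2
          - 4620 * sig r s n 4 1 1 - 22170 * sig r s n 3 2 1 - 49500 * sig r s n 2 2 2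
          - 120 * sig r s n 5 0 0 - 1800 * sig r s n 4 1 0 - 6000 * sig r s n 3 2 0
          + 10460 * sig r s n 3 1 1 + 34980 * sig r s n 2 2 1 + 3600 * sig r s n 4 0 0
          + 30600 * sig r s n 3 1 0 + 58440 * sig r s n 2 2 0 + 88710 * sig r s n 2 1 1
          - 34800 * sig r s n 3 0 0 - 165480 * sig r s n 2 1 0 - 364268 * sig r s n 1 1 1
          + 140040 * sig r s n 2 0 0 + 344520 * sig r s n 1 1 0 - 240720 * sig r s n 1 0 0
          + 146400) := by
  have count := congrArg (Nat.cast : ℕ → ℤ) (mul_numPLR_six r s n)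
  push_cast [cast_descFactorial_eq_prod] at count
  rw [count]
  simp only [sum_range_succ, sum_range_zero, prod_range_succ, prod_range_zero, disjointTripleTable,
    List.getD_cons_zero, List.getD_cons_succ, List.getD_nil, Nat.cast_zero, Nat.cast_one,
    Nat.cast_ofNat, zero_mul, zero_add, add_zero]
  simp (disch := decide) only [sig_self_self_self, sig_self_self, sig_self_right, sig_of_ne]
  ring
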